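/- arXiv:2304.13735 — 2 statements merged into one kernel-verified Lean document; each statement's English description precedes it below -/
import Mathlib

section
/- Let $p$ be a prime, $q$ a power of $p$ (with positive exponent) and $d\ge 1$ an integer. Write $\bar a=a^q$ for $a\in\mathbb F_{q^2}$, and let $\bar f$ be obtained from $f\in\mathbb F_{q^2}[t]$ by applying $a\mapsto\bar a$ to the coefficients. For $f\in\mathbb F_{q^2}[t]$ with $f(0)\ne 0$ put $\tilde f(t)=\overline{f(0)}^{\,-1}\,t^{\deg f}\,\bar f(t^{-1})$, and call $f$ a SCIM (self-conjugate irreducible monic) polynomial if it is monic and irreducible over $\mathbb F_{q^2}$, $f(0)\neq 0$ and $\tilde f=f$. (i) If $f$ is a SCIM polynomial of degree $d$ over $\mathbb F_{q^2}$, then every root $\alpha$ of $f$ (in an algebraic closure of $\mathbb F_{q^2}$) satisfies $\alpha^{q^d+1}=1$. (ii) Conversely, suppose that $d$ is odd. If $\alpha\in\mathbb F_{q^{2d}}$ satisfies $\alpha^{q^d+1}=1$ and $\mathbb F_{q^2}(\alpha)=\mathbb F_{q^{2d}}$, then the minimal polynomial of $\alpha$ over $\mathbb F_{q^2}$ is a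 SCIM polynomial of degree $d$. -/
open Polynomial

/-- `f̃(t) = conj(f(0))⁻¹ · t^(deg f) · f̄(1/t)`, where `f̄` is `f` with the conjugation `σ`
applied coefficientwise. -/
noncomputable def tildePoly {F : Type*} [Field F] (σ : F →+* F) (f : F[X]) : F[X] :=
  Polynomial.C (σ (f.coeff 0))⁻¹ * (f.map σ).reverse

/-- A self-conjugate irreducible monic (SCIM) polynomial: a monic irreducible polynomial `f`
with `f(0) ≠ 0` and `f̃ = f`. -/
def IsSCIM {F : Type*} [Field F] (σ : F →+* F) (f : F[X]) : Prop :=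
  f.Monic ∧ Irreducible f ∧ f.coeff 0 ≠ 0 ∧ tildePoly σ f = f

theorem natDegree_tildePoly {F : Type*} [Field F] (σ : F →+* F) {f : F[X]}
    (hf : f.coeff 0 ≠ 0) : (tildePoly σ f).natDegree = f.natDegree := by
  have h0 : (f.map σ).natTrailingDegree = 0 := by
    apply natTrailingDegree_eq_zero_of_constantCoeff_ne_zero
    simpa using hf
  rw [tildePoly, natDegree_C_mul (by simpa using hf), reverse_natDegree, h0, natDegree_map,
    Nat.sub_zero]

theorem monic_tildePoly {F : Type*} [Field F] (σ : F →+* F) {f : F[X]}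
    (hf : f.coeff 0 ≠ 0) : (tildePoly σ f).Monic := by
  have h0 : (f.map σ).natTrailingDegree = 0 := by
    apply natTrailingDegree_eq_zero_of_constantCoeff_ne_zero
    simpa using hf
  rw [Monic, tildePoly, leadingCoeff_mul, leadingCoeff_C, reverse_leadingCoeff, trailingCoeff, h0,
    coeff_map]
  exact inv_mul_cancel₀ (by simpa using hf)

/-- If `σ` is the `q`-power map, the map `α ↦ α⁻ᑫ` sends nonzero roots of `f` to roots of `f̃`. -/
theorem aeval_tildePoly_eq_zero {F L : Type*} [Field F] [Field L] [Algebra F L] (p ℓ : ℕ)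
    [ExpChar L p] (σ : F →+* F) (hσ : ∀ x : F, σ x = x ^ p ^ ℓ) {f : F[X]} {α : L}
    (hα : α ≠ 0) (h : aeval α f = 0) : aeval (α ^ p ^ ℓ)⁻¹ (tildePoly σ f) = 0 := by
  have hcomp : (iterateFrobenius L p ℓ).comp (algebraMap F L) = (algebraMap F L).comp σ := by
    ext x
    simp [iterateFrobenius_def, hσ]
  have hconj : eval₂ (algebraMap F L) (α ^ p ^ ℓ) (f.map σ) = 0 := by
    rw [eval₂_map, ← hcomp, ← iterateFrobenius_def, ← hom_eval₂, ← aeval_def, h, map_zero]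
  let _ : Invertible (α ^ p ^ ℓ) := invertibleOfNonzero (pow_ne_zero _ hα)
  have hrev := (eval₂_reverse_eq_zero_iff (algebraMap F L) (α ^ p ^ ℓ) (f.map σ)).mpr hconj
  rw [invOf_eq_inv] at hrev
  rw [tildePoly, map_mul, aeval_def _ (reverse _), hrev, mul_zero]

theorem ne_zero_of_aeval_eq_zero_of_coeff_zero_ne_zero {F L : Type*} [Field F] [Field L]
    [Algebra F L] {f : F[X]} (hf : f.coeff 0 ≠ 0) {α : L} (h : aeval α f = 0) : α ≠ 0 := by
  rintro rfl
  rw [aeval_def, eval₂_at_zero] at h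
  exact hf ((map_eq_zero _).mp h)

/-- An endomorphism `τ` of a finite extension `L / F`, where `|F| = q ^ 2`, that sends a
generator `β` to `β⁻ᑫ` squares to the Frobenius, so `[L : F]` is odd and
`β ^ (q ^ [L : F] + 1) = 1`. -/
theorem pow_eq_one_of_algHom_apply_eq_inv_pow {F L : Type*} [Field F] [Fintype F] [Field L]
    [Algebra F L] [Finite L] {q : ℕ} (hF : Fintype.card F = q ^ 2) {β : L} (hβ : β ≠ 0)
    (hgen : ∀ g₁ g₂ : L →ₐ[F] L, g₁ β = g₂ β → g₁ = g₂) (τ : L →ₐ[F] L)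
    (hτ : τ β = (β ^ q)⁻¹) : β ^ (q ^ Module.finrank F L + 1) = 1 := by
  set φ := FiniteField.frobeniusAlgHom F L with hφ
  set n := Module.finrank F L with hn
  have hord : orderOf φ = n := FiniteField.orderOf_frobeniusAlgHom F L
  have hpos : 0 < n := Module.finrank_pos
  have hsq : τ ^ 2 = φ := hgen _ _ <| by
    rw [sq, AlgHom.mul_apply, hτ, map_inv₀, map_pow, hτ, hφ, FiniteField.frobeniusAlgHom_apply,
      hF]
    simp [← pow_mul, sq]
  have hτn : τ ^ n = 1 := by
    obtain ⟨k, hk⟩ := (FiniteField.bijective_frobeniusAlgHom_pow F L).2 τ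
    rw [← hk]
    change (φ ^ (k : ℕ)) ^ n = 1
    rw [← pow_mul, mul_comm, pow_mul, ← hord, pow_orderOf_eq_one, one_pow]
  obtain ⟨m, hm⟩ | ⟨m, hm⟩ := n.even_or_odd
  · have hφm : φ ^ m = 1 := by rw [← hsq, ← pow_mul, two_mul, ← hm, hτn]
    have := Nat.le_of_dvd (by omega) (orderOf_dvd_of_pow_eq_one hφm)
    omega
  · have hfix : τ ((φ ^ m) β) = β := by
      rw [← AlgHom.mul_apply, ← hsq, ← pow_mul, ← pow_succ', ← hm, hτn, AlgHom.one_apply]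
    have hφm : (φ ^ m) β = β ^ q ^ (2 * m) := by
      rw [AlgHom.coe_pow, hφ, FiniteField.coe_frobeniusAlgHom, pow_iterate, hF, ← pow_mul]
    rw [hφm, map_pow, hτ, inv_pow, ← pow_mul, ← pow_succ', ← hm] at hfix
    rw [pow_succ]
    nth_rewrite 2 [← hfix]
    exact mul_inv_cancel₀ (pow_ne_zero _ hβ)

theorem IsSCIM.pow_eq_one_of_aeval_eq_zero {F K : Type*} [Field F] [Fintype F] [Field K]
    [Algebra F K] {p ℓ : ℕ} [CharP F p] (hp : p.Prime) (hF : Fintype.card F = (p ^ ℓ) ^ 2)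
    (σ : F →+* F) (hσ : ∀ x : F, σ x = x ^ p ^ ℓ) {f : F[X]} (hf : IsSCIM σ f) {α : K}
    (hα : aeval α f = 0) : α ^ ((p ^ ℓ) ^ f.natDegree + 1) = 1 := by
  obtain ⟨hmonic, hirr, h0, htilde⟩ := hf
  have : Fact (Irreducible f) := ⟨hirr⟩
  have : Module.Finite F (AdjoinRoot f) := hmonic.finite_adjoinRoot
  have : Finite (AdjoinRoot f) := Module.finite_of_finite F
  have : CharP (AdjoinRoot f) p := charP_of_injective_algebraMap' F p
  have : ExpChar (AdjoinRoot f) p := .prime hp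
  have hroot : aeval (AdjoinRoot.root f) f = 0 := by simp [AdjoinRoot.aeval_eq]
  have hne := ne_zero_of_aeval_eq_zero_of_coeff_zero_ne_zero h0 hroot
  have hconj := aeval_tildePoly_eq_zero p ℓ σ hσ hne hroot
  rw [htilde] at hconj
  have key := pow_eq_one_of_algHom_apply_eq_inv_pow hF hne
    (fun _ _ h => AdjoinRoot.algHom_ext h)
    (AdjoinRoot.liftAlgHom f (Algebra.ofId F _) _ hconj) (AdjoinRoot.liftAlgHom_root ..)
  rw [(AdjoinRoot.powerBasis hirr.ne_zero).finrank, AdjoinRoot.powerBasis_dim] at key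
  rw [aeval_def] at hα
  have := congrArg (AdjoinRoot.lift (algebraMap F K) α hα) key
  rwa [map_pow, map_one, AdjoinRoot.lift_root] at this

theorem isSCIM_minpoly_of_pow_eq_one {F E : Type*} [Field F] [Fintype F] [Field E] [Algebra F E]
    {p ℓ d : ℕ} [CharP F p] (hp : p.Prime) (hF : Fintype.card F = (p ^ ℓ) ^ 2)
    (σ : F →+* F) (hσ : ∀ x : F, σ x = x ^ p ^ ℓ) (hd : Odd d) {α : E} (hint : IsIntegral F α)
    (hα : α ^ ((p ^ ℓ) ^ d + 1) = 1) : IsSCIM σ (minpoly F α) := by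
  have : CharP E p := charP_of_injective_algebraMap' F p
  have : ExpChar E p := .prime hp
  have hne : α ≠ 0 := by
    rintro rfl
    simp at hα
  have h0 : (minpoly F α).coeff 0 ≠ 0 := minpoly.coeff_zero_ne_zero hint hne
  refine ⟨minpoly.monic hint, minpoly.irreducible hint, h0, ?_⟩
  obtain ⟨m, rfl⟩ := hd
  have hinv : (α ^ p ^ ℓ)⁻¹ = (FiniteField.frobeniusAlgHom F E ^ (m + 1)) α := by
    rw [AlgHom.coe_pow, FiniteField.coe_frobeniusAlgHom, pow_iterate, hF]
    change _ = α ^ ((p ^ ℓ) ^ 2) ^ (m + 1)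
    have hexp : ((p ^ ℓ) ^ 2) ^ (m + 1) = (p ^ ℓ) ^ (2 * m + 1) * p ^ ℓ := by ring
    rw [hexp, pow_mul, ← inv_pow]
    congr 1
    exact inv_eq_of_mul_eq_one_left (by rwa [← pow_succ])
  have hconj := aeval_tildePoly_eq_zero p ℓ σ hσ hne (minpoly.aeval F α)
  have hroot : aeval (α ^ p ^ ℓ)⁻¹ (minpoly F α) = 0 := by
    rw [hinv, aeval_algHom_apply, minpoly.aeval, map_zero]
  have hmin := minpoly.eq_of_irreducible_of_monic (minpoly.irreducible hint) hroot
    (minpoly.monic hint)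
  have hdvd : minpoly F α ∣ tildePoly σ (minpoly F α) := by
    conv_lhs => rw [hmin]
    exact minpoly.dvd F _ hconj
  exact eq_of_monic_of_dvd_of_natDegree_le (minpoly.monic hint) (monic_tildePoly σ h0) hdvd
    (natDegree_tildePoly σ h0).le

theorem statement3 (p ℓ q : ℕ) (hp : p.Prime) (hℓ : 0 < ℓ) (hq : q = p ^ ℓ)
    {F : Type*} [Field F] [Fintype F] (hF : Fintype.card F = q ^ 2)
    (σ : F →+* F) (hσ : ∀ x : F, σ x = x ^ q) (d : ℕ) (hd : 1 ≤ d)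
    {K : Type*} [Field K] [Algebra F K] [IsAlgClosure F K]
    {E : Type*} [Field E] [Fintype E] (hE : Fintype.card E = q ^ (2 * d))
    [Algebra F E] :
    (∀ f : F[X], IsSCIM σ f → f.natDegree = d →
      ∀ α : K, Polynomial.aeval α f = 0 → α ^ (q ^ d + 1) = 1) ∧
    (Odd d → ∀ α : E, α ^ (q ^ d + 1) = 1 → IntermediateField.adjoin F {α} = ⊤ →
      IsSCIM σ (minpoly F α) ∧ (minpoly F α).natDegree = d) := by
  subst hq
  have : Fact p.Prime := ⟨hp⟩
  have : CharP F p := by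
    apply charP_of_card_eq_prime_pow (f := ℓ * 2)
    rw [hF, pow_mul]
  refine ⟨?_, fun hodd α hα hgen => ?_⟩
  · rintro f hf rfl α hα
    exact hf.pow_eq_one_of_aeval_eq_zero hp hF σ hσ hα
  · have hint : IsIntegral F α := Algebra.IsIntegral.isIntegral α
    refine ⟨isSCIM_minpoly_of_pow_eq_one hp hF σ hσ hodd hint hα, ?_⟩
    have hcard := Module.card_eq_pow_finrank (K := F) (V := E)
    rw [hE, hF, ← pow_mul (p ^ ℓ) 2] at hcard
    have hq : 1 < p ^ ℓ := Nat.one_lt_pow hℓ.ne' hp.one_lt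
    have := Nat.pow_right_injective hq hcard
    rw [← IntermediateField.adjoin.finrank hint, hgen, IntermediateField.finrank_top']
    omega
end

section
/- Let $q$ be a prime power and let $f(x)$ be an irreducible polynomial of degree $n$ over the finite field $\mathbb{F}_q$ with $f(0)\neq 0$, whose roots (in an algebraic closure of $\mathbb{F}_q$) have multiplicative order $t$. For a positive integer $s$ coprime to $q$ let $\mathcal{M}(s,q)$ denote the multiplicative order of $q$ modulo $s$, i.e. the least integer $k\ge 1$ with $q^{k}\equiv 1 \pmod s$, and let $\varphi$ be Euler's totient function. Let $m$ be a natural number with $\gcd(m,q)=1$, and write $m=m_1m_2$ where $\gcd(m_1,t)=1$ and every prime factor of $m_2$ divides $t$. Then: (1) each root of $f(x^m)$ has multiplicative order of the form $d\,m_2\,t$ with $d$ a divisor of $m_1$; (2) for each divisor $d$ of $m_1$, the polynomial $f(x^m)$ has, up to nonzero scalar multiples, exactly $n\,m_2\,\varphi(d)/\mathcal{M}(d m_2 t,q)$ irreducible factors over $\mathbb{F}_q$ whose roots have order $d\,m_2\,t$, and each such factor has degree $\mathcal{M}(d m_2 t,q)$. -/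
open Polynomial

/-- If `b ^ (m₁ * m₂)` has order `t` and every prime factor of `m₂` divides `t`,
then the order of `b` is `d * m₂ * t` for a divisor `d` of `m₁`. -/
theorem exists_orderOf_eq_of_orderOf_pow {G : Type*} [Monoid G] {b : G} {m₁ m₂ t : ℕ}
    (hm : m₁ * m₂ ≠ 0) (hb : orderOf (b ^ (m₁ * m₂)) = t)
    (hm₂ : ∀ r : ℕ, r.Prime → r ∣ m₂ → r ∣ t) :
    ∃ d, d ∣ m₁ ∧ orderOf b = d * m₂ * t := by
  set N := orderOf b with hN
  have hgN : N.gcd (m₁ * m₂) ∣ N := Nat.gcd_dvd_left _ _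
  have hg0 : 0 < N.gcd (m₁ * m₂) := Nat.gcd_pos_of_pos_right _ (Nat.pos_of_ne_zero hm)
  have hNt : N = t * N.gcd (m₁ * m₂) := by
    rw [orderOf_pow' _ hm] at hb
    exact (Nat.div_eq_iff_eq_mul_left hg0 hgN).mp hb
  obtain ⟨d, e, hd, ⟨c, hc⟩, hde⟩ := (Nat.dvd_mul).mp (Nat.gcd_dvd_right N (m₁ * m₂))
  have hc1 : c = 1 := by
    by_contra hc1
    obtain ⟨r, hr, hrc⟩ := Nat.exists_prime_and_dvd hc1
    have hrt : r ∣ t := hm₂ r hr (hc ▸ Dvd.dvd.mul_left hrc e)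
    have h1 : r * N.gcd (m₁ * m₂) ∣ N := by
      conv_rhs => rw [hNt]
      exact Nat.mul_dvd_mul_right hrt _
    have h2 : r * N.gcd (m₁ * m₂) ∣ m₁ * m₂ := by
      rw [← hde, hc, show r * (d * e) = d * (e * r) by ring]
      exact Nat.mul_dvd_mul hd (Nat.mul_dvd_mul_left _ hrc)
    have h3 := Nat.le_of_dvd hg0 (Nat.dvd_gcd h1 h2)
    nlinarith [hr.two_le]
  refine ⟨d, hd, ?_⟩
  rw [hNt, ← hde, hc, hc1]
  ring

/-- A nonzero element of an algebraically closed field has exactly `e` distinct `e`-th roots if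
`e` is invertible. -/
theorem ncard_setOf_pow_eq {L : Type*} [Field L] [IsAlgClosed L] {e : ℕ} (he : (e : L) ≠ 0)
    {a : L} (ha : a ≠ 0) : {b : L | b ^ e = a}.ncard = e := by
  have he0 : 0 < e := Nat.pos_of_ne_zero fun h => he (by simp [h])
  have h := card_rootSet_eq_natDegree (K := L) (separable_X_pow_sub_C a he ha)
    (IsAlgClosed.splits_domain _)
  rw [natDegree_X_pow_sub_C, ← Nat.card_eq_fintype_card] at h
  convert h using 1
  rw [← Nat.card_coe_set_eq]
  congr 2
  ext b
  rw [mem_rootSet_of_ne (X_pow_sub_C_ne_zero he0 a)]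
  simp [sub_eq_zero]

theorem finite_setOf_pow_eq {L : Type*} [Field L] {e : ℕ} (he : e ≠ 0) (a : L) :
    {b : L | b ^ e = a}.Finite := by
  classical
  refine ((nthRoots e a).toFinset.finite_toSet).subset fun b hb => ?_
  simpa [mem_nthRoots (Nat.pos_of_ne_zero he)] using hb

/-- Among the `(m₁ * m₂)`-th roots of an element of order `t`, exactly `d * m₂` have order dividing
`d * m₂ * t`. -/
theorem ncard_setOf_pow_eq_and_pow_eq_one {L : Type*} [Field L] [IsAlgClosed L] {a : L}
    {m₁ m₂ t d : ℕ} (hm : ((m₁ * m₂ : ℕ) : L) ≠ 0) (ht0 : 0 < t) (ha : orderOf a = t)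
    (hm₁ : m₁.Coprime t) (hd : d ∣ m₁) :
    {b : L | b ^ (m₁ * m₂) = a ∧ b ^ (d * m₂ * t) = 1}.ncard = d * m₂ := by
  obtain ⟨c, rfl⟩ := hd
  have hat : a ^ t = 1 := ha ▸ pow_orderOf_eq_one a
  have ha0 : a ≠ 0 := by
    rintro rfl
    simp [ht0.ne'] at hat
  obtain ⟨u, hu⟩ : ∃ u, c * u ≡ 1 [MOD t] := by
    rcases Nat.eq_or_lt_of_le (Nat.succ_le_of_lt ht0) with rfl | ht1
    · exact ⟨0, Nat.modEq_one⟩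
    · obtain ⟨u, -, hu⟩ := Nat.exists_mul_mod_eq_one_of_coprime
        (hm₁.coprime_dvd_left (Dvd.intro_left d rfl)) ht1
      exact ⟨u, hu.trans (Nat.mod_eq_of_lt ht1).symm⟩
  have hcu : a ^ (c * u) = a := (pow_eq_pow_of_modEq hu hat).trans (pow_one a)
  have hset : {b : L | b ^ (d * c * m₂) = a ∧ b ^ (d * m₂ * t) = 1} =
      {b : L | b ^ (d * m₂) = a ^ u} := by
    ext b
    simp only [Set.mem_ofPred_eq]
    constructor
    · rintro ⟨h1, h2⟩
      have h3 : (b ^ (d * m₂)) ^ (c * u) = b ^ (d * m₂) :=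
        (pow_eq_pow_of_modEq hu ((pow_mul _ _ _).symm.trans h2)).trans (pow_one _)
      rw [← h3, ← h1]
      ring
    · intro h
      constructor
      · rw [show d * c * m₂ = d * m₂ * c by ring, pow_mul, h, ← pow_mul, mul_comm u, hcu]
      · rw [pow_mul, h, ← pow_mul, mul_comm u, pow_mul, hat, one_pow]
  rw [hset, ncard_setOf_pow_eq _ (pow_ne_zero u ha0)]
  intro h
  apply hm
  rw [show d * c * m₂ = d * m₂ * c by ring, Nat.cast_mul, h, zero_mul]

/-- Among the `(m₁ * m₂)`-th roots of an element of order `t`, exactly `m₂ * φ d` have order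
`d * m₂ * t`. -/
theorem ncard_setOf_pow_eq_and_orderOf_eq {L : Type*} [Field L] [IsAlgClosed L] {a : L}
    {m₁ m₂ t : ℕ} (hm : ((m₁ * m₂ : ℕ) : L) ≠ 0) (ht0 : 0 < t) (ha : orderOf a = t)
    (hm₁ : m₁.Coprime t) (hm₂ : ∀ r : ℕ, r.Prime → r ∣ m₂ → r ∣ t) {d : ℕ} (hd : d ∣ m₁) :
    {b : L | b ^ (m₁ * m₂) = a ∧ orderOf b = d * m₂ * t}.ncard = m₂ * d.totient := by
  classical
  have hm0 : m₁ * m₂ ≠ 0 := fun h => hm (by simp [h])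
  have hm₁0 : m₁ ≠ 0 := left_ne_zero_of_mul hm0
  have hm₂0 : m₂ ≠ 0 := right_ne_zero_of_mul hm0
  set F : ℕ → Set L := fun d => {b : L | b ^ (m₁ * m₂) = a ∧ orderOf b = d * m₂ * t} with hF
  have hfin : ∀ d, (F d).Finite := fun d =>
    (finite_setOf_pow_eq hm0 a).subset fun b hb => hb.1
  have hsum : ∀ d, d ∣ m₁ → ∑ k ∈ d.divisors, (F k).ncard = ∑ k ∈ d.divisors, m₂ * k.totient := by
    intro d hd
    have hd0 : d ≠ 0 := ne_zero_of_dvd_ne_zero hm₁0 hd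
    rw [← Finset.mul_sum, Nat.sum_totient, mul_comm m₂,
      ← ncard_setOf_pow_eq_and_pow_eq_one hm ht0 ha hm₁ hd]
    have hU : {b : L | b ^ (m₁ * m₂) = a ∧ b ^ (d * m₂ * t) = 1} =
        ((d.divisors.biUnion fun k => (hfin k).toFinset : Finset L) : Set L) := by
      ext b
      simp only [Set.mem_ofPred_eq, Finset.coe_biUnion, Set.Finite.coe_toFinset, Set.mem_iUnion,
        Finset.mem_coe, Nat.mem_divisors, hF, exists_prop]
      constructor
      · rintro ⟨h1, h2⟩
        obtain ⟨k, -, hk⟩ := exists_orderOf_eq_of_orderOf_pow hm0 (h1 ▸ ha) hm₂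
        refine ⟨k, ⟨?_, hd0⟩, h1, hk⟩
        have h3 := orderOf_dvd_of_pow_eq_one h2
        rw [hk, mul_assoc, mul_assoc] at h3
        exact Nat.dvd_of_mul_dvd_mul_right (by positivity) h3
      · rintro ⟨k, ⟨hk, -⟩, h1, h2⟩
        refine ⟨h1, orderOf_dvd_iff_pow_eq_one.mp ?_⟩
        rw [h2]
        exact Nat.mul_dvd_mul_right (Nat.mul_dvd_mul_right hk _) _
    rw [hU, Set.ncard_coe_finset, Finset.card_biUnion]
    · exact Finset.sum_congr rfl fun k _ => Set.ncard_eq_toFinset_card _ (hfin k)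
    · intro k _ l _ hkl
      refine Finset.disjoint_left.mpr fun b hb hb' => ?_
      rw [Set.Finite.mem_toFinset] at hb hb'
      have h := hb.2.symm.trans hb'.2
      rw [mul_assoc, mul_assoc] at h
      exact hkl (Nat.eq_of_mul_eq_mul_right (by positivity) h)
  change (F d).ncard = _
  induction d using Nat.strong_induction_on with
  | _ d ih =>
    have hd0 : d ≠ 0 := ne_zero_of_dvd_ne_zero hm₁0 hd
    have h := hsum d hd
    rw [← Nat.cons_self_properDivisors hd0, Finset.sum_cons, Finset.sum_cons,
      Finset.sum_congr rfl fun k hk => ih k (Nat.mem_properDivisors.mp hk).2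
        ((Nat.mem_properDivisors.mp hk).1.trans hd)] at h
    exact Nat.add_right_cancel h

theorem coprime_card_iff_natCast_ne_zero {K : Type*} [Field K] [Fintype K] (s : ℕ) :
    s.Coprime (Fintype.card K) ↔ (s : K) ≠ 0 := by
  obtain ⟨p, hp, n, hn⟩ := (FiniteField.card' K)
  obtain ⟨h1, h2⟩ := hn
  rw [h2, Nat.coprime_pow_right_iff n.pos, Nat.coprime_comm, h1.coprime_iff_not_dvd, Ne,
    CharP.cast_eq_zero_iff K p]

theorem Irreducible.orderOf_eq_of_aeval_eq_zero {K L : Type*} [Field K] [Field L] [Algebra K L]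
    {h : K[X]} (hirr : Irreducible h) {b c : L} (hb : aeval b h = 0) (hc : aeval c h = 0) :
    orderOf b = orderOf c := by
  refine orderOf_eq_orderOf_iff.mpr fun k => ?_
  have hiff := hirr.dvd_iff_aeval_eq_zero hb (q := X ^ k - 1)
  rw [← hirr.dvd_iff_aeval_eq_zero hc] at hiff
  simpa [sub_eq_zero] using hiff

/-- The degree of an irreducible polynomial over a finite field with a root of order `s` is the
multiplicative order of the cardinality of the field modulo `s`. -/
theorem natDegree_eq_orderOf_card_of_orderOf_root {K L : Type*} [Field K] [Fintype K] [Field L]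
    [Algebra K L] {h : K[X]} (hirr : Irreducible h) {b : L} (hb : aeval b h = 0)
    (hs : 0 < orderOf b) :
    h.natDegree = orderOf (Fintype.card K : ZMod (orderOf b)) := by
  obtain ⟨p, hp, n, hp', hcard⟩ := FiniteField.card' K
  have := Fact.mk hp'
  have : NeZero (orderOf b) := ⟨hs.ne'⟩
  have hsL := (IsPrimitiveRoot.orderOf b).neZero'.out
  have : NeZero ((orderOf b : ℕ) : L) := ⟨hsL⟩
  have hsK : (orderOf b : K) ≠ 0 := fun h0 => hsL (by simpa using congrArg (algebraMap K L) h0)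
  have hcop : p.Coprime (orderOf b) := by
    rw [hp'.coprime_iff_not_dvd, ← CharP.cast_eq_zero_iff K p]
    exact hsK
  have hdvd : h ∣ cyclotomic (orderOf b) K := by
    rw [← hirr.dvd_iff_aeval_eq_zero hb, aeval_def, ← eval_map, map_cyclotomic]
    exact isRoot_cyclotomic_iff.mpr (IsPrimitiveRoot.orderOf b)
  rw [natDegree_of_dvd_cyclotomic_of_irreducible hcard hcop hdvd hirr, ← orderOf_units]
  simp [hcard]

/-- The elements of a finite set, stable under conjugation over a perfect field and consisting of
elements of degree `k`, are the roots of `A.ncard / k` monic irreducible polynomials. -/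
theorem ncard_eq_card_irreducible_mul {K L : Type*} [Field K] [PerfectField K] [Field L]
    [Algebra K L] [IsAlgClosed L] {A : Set L} (hA : A.Finite) {H : Set K[X]} {k : ℕ}
    (hmonic : ∀ h ∈ H, h.Monic) (hirr : ∀ h ∈ H, Irreducible h) (hdeg : ∀ h ∈ H, h.natDegree = k)
    (hroot : ∀ h ∈ H, ∀ b : L, aeval b h = 0 → b ∈ A) (hmin : ∀ b ∈ A, minpoly K b ∈ H) :
    A.ncard = H.ncard * k := by
  classical
  have hex : ∀ h ∈ H, ∃ b : L, aeval b h = 0 := fun h hh =>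
    IsAlgClosed.exists_aeval_eq_zero L h (degree_pos_of_irreducible (hirr h hh)).ne'
  have hminpoly : ∀ h ∈ H, ∀ b : L, aeval b h = 0 → minpoly K b = h := fun h hh b hb =>
    (minpoly.eq_of_irreducible_of_monic (hirr h hh) hb (hmonic h hh)).symm
  have hHA : H = minpoly K '' A := by
    ext h
    refine ⟨fun hh => ?_, fun ⟨b, hb, hbh⟩ => hbh ▸ hmin b hb⟩
    obtain ⟨b, hb⟩ := hex h hh
    exact ⟨b, hroot h hh b hb, hminpoly h hh b hb⟩
  have hH : H.Finite := hHA ▸ hA.image _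
  rw [Set.ncard_eq_toFinset_card A hA, Set.ncard_eq_toFinset_card H hH,
    Finset.card_eq_sum_card_fiberwise (f := minpoly K) (t := hH.toFinset)
      (fun b hb => by simpa using hmin b (by simpa using hb))]
  refine Finset.sum_const_nat fun h hh => ?_
  rw [Set.Finite.mem_toFinset] at hh
  rw [← hdeg h hh, ← card_rootSet_eq_natDegree (K := L) (PerfectField.separable_of_irreducible
    (hirr h hh)) (IsAlgClosed.splits _), ← Set.toFinset_card]
  congr 1
  ext b
  simp only [Finset.mem_filter, Set.Finite.mem_toFinset, Set.mem_toFinset,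
    mem_rootSet_of_ne (hirr h hh).ne_zero]
  exact ⟨fun hb => hb.2 ▸ minpoly.aeval K b, fun hb => ⟨hroot h hh b hb, hminpoly h hh b hb⟩⟩

/-- If the roots of a separable polynomial `f` have order `t`, then `f(x ^ (m₁ * m₂))` has
`deg f * m₂ * φ d` roots of order `d * m₂ * t`. -/
theorem ncard_roots_comp_X_pow_orderOf_eq {K L : Type*} [Field K] [Field L] [Algebra K L]
    [IsAlgClosed L] {f : K[X]} (hf : f.Separable) {m₁ m₂ t : ℕ}
    (hm : ((m₁ * m₂ : ℕ) : L) ≠ 0) (ht0 : 0 < t) (ht : ∀ a : L, aeval a f = 0 → orderOf a = t)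
    (hm₁ : m₁.Coprime t) (hm₂ : ∀ r : ℕ, r.Prime → r ∣ m₂ → r ∣ t) {d : ℕ} (hd : d ∣ m₁) :
    {b : L | aeval b (f.comp (X ^ (m₁ * m₂))) = 0 ∧ orderOf b = d * m₂ * t}.Finite ∧
    {b : L | aeval b (f.comp (X ^ (m₁ * m₂))) = 0 ∧ orderOf b = d * m₂ * t}.ncard =
      f.natDegree * (m₂ * d.totient) := by
  classical
  have hm0 : m₁ * m₂ ≠ 0 := fun h => hm (by simp [h])
  set A : Set L := {b : L | aeval b (f.comp (X ^ (m₁ * m₂))) = 0 ∧ orderOf b = d * m₂ * t}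
  have hmem : ∀ b, b ∈ A ↔ b ^ (m₁ * m₂) ∈ f.rootSet L ∧ orderOf b = d * m₂ * t := fun b => by
    simp [A, mem_rootSet_of_ne hf.ne_zero, aeval_comp]
  have hfin : A.Finite := by
    refine ((f.rootSet_finite L).biUnion fun a _ => finite_setOf_pow_eq hm0 a).subset fun b hb => ?_
    simpa using ((hmem b).mp hb).1
  refine ⟨hfin, ?_⟩
  rw [Set.ncard_eq_toFinset_card A hfin, Finset.card_eq_sum_card_fiberwise
    (f := fun b => b ^ (m₁ * m₂)) (t := (f.rootSet L).toFinset)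
      (fun b hb => by simpa using ((hmem b).mp (by simpa using hb)).1),
    ← card_rootSet_eq_natDegree (K := L) hf (IsAlgClosed.splits _), ← Set.toFinset_card]
  refine Finset.sum_const_nat fun a ha => ?_
  rw [Set.mem_toFinset] at ha
  rw [← ncard_setOf_pow_eq_and_orderOf_eq hm ht0 (ht a (aeval_eq_zero_of_mem_rootSet ha)) hm₁ hm₂ hd,
    ← Set.ncard_coe_finset]
  congr 1
  ext b
  simp only [Finset.coe_filter, Set.Finite.mem_toFinset, Set.mem_ofPred_eq, hmem]
  exact ⟨fun h => ⟨h.2, h.1.2⟩, fun h => ⟨⟨h.1 ▸ ha, h.2⟩, h.1⟩⟩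

/-- Factorization of `f(x^m)` over the finite field `K` with `q` elements. Roots are taken in an
algebraic closure, irreducible factors are counted up to scalars (as monic polynomials), and the
least natural number `k ≥ 1` with `q ^ k ≡ 1 (mod s)` is `orderOf (q : ZMod s)`. The hypothesis
`0 < t` says that the roots of `f` are nonzero, i.e. have a multiplicative order at all
(`orderOf 0 = 0`). -/
theorem statement11 {K : Type*} [Field K] [Fintype K] (q : ℕ) (hK : Fintype.card K = q)
    (f : K[X]) (n : ℕ) (hirr : Irreducible f) (hdeg : f.natDegree = n)
    (t : ℕ) (ht0 : 0 < t)
    (ht : ∀ α : AlgebraicClosure K, Polynomial.aeval α f = 0 → orderOf α = t)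
    (m m₁ m₂ : ℕ) (hcop : Nat.gcd m q = 1) (hmm : m = m₁ * m₂)
    (hm₁t : Nat.gcd m₁ t = 1) (hm₂t : ∀ r : ℕ, r.Prime → r ∣ m₂ → r ∣ t) :
    (∀ β : AlgebraicClosure K, Polynomial.aeval β (f.comp (X ^ m)) = 0 →
      ∃ d : ℕ, d ∣ m₁ ∧ orderOf β = d * m₂ * t) ∧
    ∀ d : ℕ, d ∣ m₁ →
      (Nat.card {h : K[X] // h.Monic ∧ Irreducible h ∧ h ∣ f.comp (X ^ m) ∧
          ∀ β : AlgebraicClosure K, Polynomial.aeval β h = 0 → orderOf β = d * m₂ * t} : ℚ)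
        = ((n : ℚ) * (m₂ : ℚ) * (Nat.totient d : ℚ)) /
            (orderOf (q : ZMod (d * m₂ * t)) : ℚ) ∧
      ∀ h : K[X], Irreducible h → h ∣ f.comp (X ^ m) →
        (∀ β : AlgebraicClosure K, Polynomial.aeval β h = 0 → orderOf β = d * m₂ * t) →
        h.natDegree = orderOf (q : ZMod (d * m₂ * t)) := by
  subst hK hdeg hmm
  have hmK : ((m₁ * m₂ : ℕ) : K) ≠ 0 := (coprime_card_iff_natCast_ne_zero _).mp hcop
  have hm : ((m₁ * m₂ : ℕ) : AlgebraicClosure K) ≠ 0 := fun h0 =>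
    hmK ((algebraMap K (AlgebraicClosure K)).injective (by simpa using h0))
  have hm0 : m₁ * m₂ ≠ 0 := fun h => hm (by simp [h])
  have hm₂0 : 0 < m₂ := Nat.pos_of_ne_zero (right_ne_zero_of_mul hm0)
  refine ⟨fun β hβ => exists_orderOf_eq_of_orderOf_pow hm0 (ht _ ?_) hm₂t, fun d hd => ?_⟩
  · simpa [aeval_comp] using hβ
  have hd0 : 0 < d := Nat.pos_of_dvd_of_pos hd (Nat.pos_of_ne_zero (left_ne_zero_of_mul hm0))
  have hs0 : 0 < d * m₂ * t := by positivity
  have hdegree : ∀ h : K[X], Irreducible h → h ∣ f.comp (X ^ (m₁ * m₂)) →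
      (∀ β : AlgebraicClosure K, aeval β h = 0 → orderOf β = d * m₂ * t) →
      h.natDegree = orderOf (Fintype.card K : ZMod (d * m₂ * t)) := by
    intro h hh _ hord
    obtain ⟨b, hb⟩ := IsAlgClosed.exists_aeval_eq_zero (AlgebraicClosure K) h
      (degree_pos_of_irreducible hh).ne'
    have hbs := hord b hb
    rw [natDegree_eq_orderOf_card_of_orderOf_root hh hb (hbs ▸ hs0), hbs]
  refine ⟨?_, hdegree⟩
  obtain ⟨hfin, hcard⟩ := ncard_roots_comp_X_pow_orderOf_eq (L := AlgebraicClosure K)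
    (PerfectField.separable_of_irreducible hirr) hm ht0 ht hm₁t hm₂t hd
  have hmin : ∀ b ∈ {b : AlgebraicClosure K | aeval b (f.comp (X ^ (m₁ * m₂))) = 0 ∧
      orderOf b = d * m₂ * t}, minpoly K b ∈ {h : K[X] | h.Monic ∧ Irreducible h ∧
        h ∣ f.comp (X ^ (m₁ * m₂)) ∧
        ∀ β : AlgebraicClosure K, aeval β h = 0 → orderOf β = d * m₂ * t} := by
    rintro b ⟨hb, hbs⟩
    have hint : IsIntegral K b := Algebra.IsIntegral.isIntegral b
    exact ⟨minpoly.monic hint, minpoly.irreducible hint, minpoly.dvd K b hb, fun β hβ =>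
      hbs ▸ (minpoly.irreducible hint).orderOf_eq_of_aeval_eq_zero hβ (minpoly.aeval K b)⟩
  have hcount := ncard_eq_card_irreducible_mul hfin (fun h hh => hh.1) (fun h hh => hh.2.1)
    (fun h hh => hdegree h hh.2.1 hh.2.2.1 hh.2.2.2)
    (fun h hh b hb => ⟨aeval_eq_zero_of_dvd_aeval_eq_zero hh.2.2.1 hb, hh.2.2.2 b hb⟩) hmin
  have hk : orderOf (Fintype.card K : ZMod (d * m₂ * t)) ≠ 0 := by
    intro hk
    have hpos : 0 < f.natDegree * (m₂ * d.totient) :=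
      Nat.mul_pos hirr.natDegree_pos (Nat.mul_pos hm₂0 (Nat.totient_pos.mpr hd0))
    rw [← hcard, hcount, hk, mul_zero] at hpos
    exact hpos.false
  rw [hcard] at hcount
  rw [eq_div_iff (Nat.cast_ne_zero.mpr hk), mul_assoc (f.natDegree : ℚ)]
  exact_mod_cast hcount.symm
end
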